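/- arXiv:math/0008039 — 2 statements merged into one kernel-verified Lean document; each statement's English description precedes it below -/
import Mathlib

section
/- Let L be a complete lattice containing an element a with ⊥ < a < ⊤. Define f : Set L₀ → Set L₀ by f(T) = {a} if a ∈ T (a viewed as an element of L₀) and f(T) = ∅ otherwise. Then f is union-preserving, but there exists no map g : L → L satisfying g(⋁T) = ⋁f(T) for every T : Set L₀; in particular f is not a state transition. (Indeed ⋁{⊤} = ⋁{a, ⊤} while ⋁f({⊤}) = ⊥ ≠ a = ⋁f({a, ⊤}).) -/
/-- The nonzero elements of `L`. -/
abbrev NZ (L : Type*) [Bot L] : Type _ := {x : L // x ≠ ⊥}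

/-- The supremum in `L` of a set of nonzero elements of `L`. -/
def lsup {L : Type*} [CompleteLattice L] (T : Set (NZ L)) : L :=
  sSup (Subtype.val '' T)

/-- A map between powersets of nonzero elements is union-preserving if it
preserves arbitrary unions. -/
def UnionPres {L M : Type*} [Bot L] [Bot M]
    (f : Set (NZ L) → Set (NZ M)) : Prop :=
  ∀ {ι : Type*} (T : ι → Set (NZ L)), f (⋃ i, T i) = ⋃ i, f (T i)

/-- The direct image map of `g : L → M` on sets of nonzero elements:
`T ↦ {g t | t ∈ T, g t ≠ ⊥}`. -/
def dirIm {L M : Type*} [Bot L] [Bot M] (g : L → M) :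
    Set (NZ L) → Set (NZ M) :=
  fun T => {y | ∃ t ∈ T, g t.val = y.val}

/-- `g` preserves arbitrary suprema. -/
def PresSup {L M : Type*} [CompleteLattice L] [CompleteLattice M]
    (g : L → M) : Prop :=
  ∀ S : Set L, g (sSup S) = ⨆ s ∈ S, g s

section lsup

variable {L : Type*} [CompleteLattice L]

theorem lsup_empty : lsup (∅ : Set (NZ L)) = ⊥ := by
  rw [lsup, Set.image_empty, sSup_empty]

theorem lsup_insert (p : NZ L) (T : Set (NZ L)) : lsup (insert p T) = p.val ⊔ lsup T := by
  rw [lsup, Set.image_insert_eq, sSup_insert, lsup]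

theorem lsup_singleton (p : NZ L) : lsup {p} = p.val := by
  rw [lsup, Set.image_singleton, sSup_singleton]

theorem lsup_pair_of_le {p q : NZ L} (hpq : p ≤ q) : lsup {p, q} = q.val := by
  rw [lsup_insert, lsup_singleton, sup_eq_right.2 hpq]

theorem isUpperSet_of_apply_lsup_eq_lsup_inter {S : Set (NZ L)} {g : L → L}
    (hg : ∀ T : Set (NZ L), g (lsup T) = lsup (T ∩ S)) : IsUpperSet S := by
  intro p q hpq hp
  by_contra hq
  have lsup_eq : lsup {q} = lsup {p, q} := by rw [lsup_singleton, lsup_pair_of_le hpq]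
  have inter_q : {q} ∩ S = ∅ := Set.singleton_inter_eq_empty.2 hq
  have inter_pq : {p, q} ∩ S = {p} := by
    rw [Set.insert_inter_of_mem hp, inter_q, insert_empty_eq]
  refine p.property (Eq.symm ?_)
  calc
    ⊥ = lsup ({q} ∩ S) := by rw [inter_q, lsup_empty]
    _ = g (lsup {q}) := (hg {q}).symm
    _ = g (lsup {p, q}) := congrArg g lsup_eq
    _ = lsup ({p, q} ∩ S) := hg {p, q}
    _ = p.val := by rw [inter_pq, lsup_singleton]

end lsup

theorem unionPres_inter_right {L : Type*} [Bot L] (S : Set (NZ L)) :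
    UnionPres fun T : Set (NZ L) => T ∩ S :=
  fun T => Set.iUnion_inter S T

theorem stmt10 {L : Type*} [CompleteLattice L]
    (a : L) (ha1 : ⊥ < a) (ha2 : a < ⊤)
    (f : Set (NZ L) → Set (NZ L))
    (hfdef : ∀ T : Set (NZ L),
      f T = {y | (⟨a, ha1.ne'⟩ : NZ L) ∈ T ∧ y = (⟨a, ha1.ne'⟩ : NZ L)}) :
    UnionPres f ∧
      ¬ ∃ g : L → L, ∀ T : Set (NZ L), g (lsup T) = lsup (f T) := by
  let p : NZ L := ⟨a, ha1.ne'⟩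
  let top : NZ L := ⟨⊤, (ha1.trans ha2).ne'⟩
  obtain rfl : f = fun T => T ∩ {p} := by
    ext T y
    rw [hfdef]
    constructor
    · rintro ⟨hp, rfl⟩
      exact ⟨hp, rfl⟩
    · rintro ⟨hp, rfl⟩
      exact ⟨hp, rfl⟩
  refine ⟨unionPres_inter_right {p}, ?_⟩
  rintro ⟨g, hg⟩
  have hupper : IsUpperSet {p} := isUpperSet_of_apply_lsup_eq_lsup_inter hg
  have htop : top = p := hupper (show p ≤ top from le_top) rfl
  exact ha2.ne' (congrArg Subtype.val htop)
end

section
/- Let L be a complete lattice containing elements a, b, c with a < b ⊔ c, ¬(a ≤ b) and ¬(a ≤ c), and let f : Set L₀ → Set L₀ be defined by f(T) = (T \ {b ⊔ c}) ∪ S, where S = {a, b, c} if b ⊔ c ∈ T and S = ∅ otherwise (all elements viewed in L₀). Then there is no family (gᵢ)_{i ∈ I} of maps gᵢ : L → L, each preserving arbitrary suprema, such that f(T) = ⋃ᵢ 𝒫gᵢ(T) for every T : Set L₀. -/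
/-!
Test a representation on singletons. Each component `g` must send `b` into `{⊥, b}` and `c` into
`{⊥, c}`, so `g (b ⊔ c) = g b ⊔ g c` is one of `⊥`, `b`, `c`, `b ⊔ c`, and no component can produce
the value `a` that `f` attaches to `b ⊔ c`.
-/

section DirectImage

variable {L M : Type*}

lemma mem_dirIm_singleton [Bot L] [Bot M] {g : L → M} {x : NZ L} {y : NZ M} :
    y ∈ dirIm g {x} ↔ g x = y := by
  simp only [dirIm, Set.mem_ofPred_eq, Set.mem_singleton_iff, exists_eq_left]

lemma dirIm_singleton_subset_singleton_iff [Bot L] [Bot M] {g : L → M} {x : NZ L} {y : NZ M} :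
    dirIm g {x} ⊆ {y} ↔ g x = ⊥ ∨ g x = y := by
  simp only [Set.subset_singleton_iff, mem_dirIm_singleton]
  constructor
  · intro h
    by_cases hx : g x = ⊥
    · exact .inl hx
    · exact .inr (congrArg Subtype.val (h ⟨g x, hx⟩ rfl))
  · rintro (hx | hx) z hz
    · exact absurd (hz.symm.trans hx) z.prop
    · exact Subtype.ext (hz.symm.trans hx)

variable [SemilatticeSup L] [OrderBot L] [SemilatticeSup M] [OrderBot M]

lemma dirIm_singleton_subset_of_eq_sup {g : L → M} (hg : ∀ x y, g (x ⊔ y) = g x ⊔ g y)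
    {b c d : NZ L} (hd : d.val = b.val ⊔ c.val) {b' c' d' : NZ M}
    (hd' : d'.val = b'.val ⊔ c'.val) (hb : dirIm g {b} ⊆ {b'}) (hc : dirIm g {c} ⊆ {c'}) :
    dirIm g {d} ⊆ {b', c', d'} := by
  intro y hy
  have hgd : g b ⊔ g c = y := by rw [← hg, ← hd, mem_dirIm_singleton.1 hy]
  simp only [Set.mem_insert_iff, Set.mem_singleton_iff, Subtype.ext_iff, ← hgd, hd']
  rcases dirIm_singleton_subset_singleton_iff.1 hb with hb | hb <;>
    rcases dirIm_singleton_subset_singleton_iff.1 hc with hc | hc <;>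
    simp only [hb, hc, bot_sup_eq, sup_bot_eq, true_or, or_true]
  have hy_bot : y.val = ⊥ := by rw [← hgd, hb, hc, bot_sup_eq]
  exact absurd hy_bot y.prop

lemma biUnion_dirIm_singleton_subset_of_eq_sup {G : Set (L → M)}
    (hG : ∀ g ∈ G, ∀ x y, g (x ⊔ y) = g x ⊔ g y)
    {b c d : NZ L} (hd : d.val = b.val ⊔ c.val) {b' c' d' : NZ M}
    (hd' : d'.val = b'.val ⊔ c'.val)
    (hb : ⋃ g ∈ G, dirIm g {b} ⊆ {b'}) (hc : ⋃ g ∈ G, dirIm g {c} ⊆ {c'}) :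
    ⋃ g ∈ G, dirIm g {d} ⊆ {b', c', d'} := by
  rw [Set.iUnion₂_subset_iff] at hb hc ⊢
  exact fun g hg => dirIm_singleton_subset_of_eq_sup (hG g hg) hd hd' (hb g hg) (hc g hg)

end DirectImage

lemma PresSup.map_sup {L M : Type*} [CompleteLattice L] [CompleteLattice M] {g : L → M}
    (hg : PresSup g) (x y : L) : g (x ⊔ y) = g x ⊔ g y := by
  rw [← sSup_pair, hg, iSup_pair]

lemma not_le_of_le_sup_of_not_le {L : Type*} [SemilatticeSup L] {a b c : L}
    (h : a ≤ b ⊔ c) (hab : ¬ a ≤ b) : ¬ c ≤ b :=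
  fun hcb => hab (h.trans (sup_le le_rfl hcb))

theorem stmt13_general {L : Type*} [SemilatticeSup L] [OrderBot L] {a b c : L}
    (hbc : ¬ b ≤ c) (hcb : ¬ c ≤ b)
    (ha : a ≠ ⊥) (hab : a ≠ b) (hac : a ≠ c) (habc : a ≠ b ⊔ c)
    (f : Set (NZ L) → Set (NZ L))
    (hfdef : ∀ T : Set (NZ L),
      f T = {y | y ∈ T ∧ y.val ≠ b ⊔ c} ∪
        {y | (∃ t ∈ T, (t : NZ L).val = b ⊔ c) ∧
          (y.val = a ∨ y.val = b ∨ y.val = c)}) :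
    ¬ ∃ G : Set (L → L),
      (∀ g ∈ G, ∀ x y, g (x ⊔ y) = g x ⊔ g y) ∧
      ∀ T : Set (NZ L), f T = ⋃ g ∈ G, dirIm g T := by
  rintro ⟨G, hG, hf⟩
  have hfix (x : NZ L) (hx : x.val ≠ b ⊔ c) : ⋃ g ∈ G, dirIm g {x} ⊆ {x} := by
    rw [← hf, hfdef]
    rintro y (⟨hy, -⟩ | ⟨⟨t, rfl, ht⟩, -⟩)
    exacts [hy, absurd ht hx]
  let b' : NZ L := ⟨b, fun h => hbc (h ▸ bot_le)⟩
  let c' : NZ L := ⟨c, fun h => hcb (h ▸ bot_le)⟩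
  let d' : NZ L := ⟨b ⊔ c, ne_bot_of_le_ne_bot b'.prop le_sup_left⟩
  have ha_mem : ⟨a, ha⟩ ∈ f {d'} := by
    rw [hfdef]
    exact .inr ⟨⟨d', rfl, rfl⟩, .inl rfl⟩
  rw [hf] at ha_mem
  have hsub : ⋃ g ∈ G, dirIm g {d'} ⊆ {b', c', d'} :=
    biUnion_dirIm_singleton_subset_of_eq_sup hG rfl rfl
      (hfix b' (left_lt_sup.2 hcb).ne) (hfix c' (right_lt_sup.2 hbc).ne)
  rcases hsub ha_mem with h | h | h
  exacts [hab (congrArg Subtype.val h), hac (congrArg Subtype.val h),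
    habc (congrArg Subtype.val h)]

theorem stmt13 {L : Type*} [CompleteLattice L]
    (a b c : L) (h1 : a < b ⊔ c) (h2 : ¬ a ≤ b) (h3 : ¬ a ≤ c)
    (f : Set (NZ L) → Set (NZ L))
    (hfdef : ∀ T : Set (NZ L),
      f T = {y | y ∈ T ∧ y.val ≠ b ⊔ c} ∪
        {y | (∃ t ∈ T, (t : NZ L).val = b ⊔ c) ∧
          (y.val = a ∨ y.val = b ∨ y.val = c)}) :
    ¬ ∃ G : Set (L → L),
      (∀ g ∈ G, PresSup g) ∧
      ∀ T : Set (NZ L), f T = ⋃ g ∈ G, dirIm g T := by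
  rintro ⟨G, hG, hf⟩
  exact stmt13_general (not_le_of_le_sup_of_not_le (h1.le.trans_eq (sup_comm b c)) h3)
    (not_le_of_le_sup_of_not_le h1.le h2) (fun h => h2 (h.trans_le bot_le))
    (fun h => h2 h.le) (fun h => h3 h.le) h1.ne f hfdef
    ⟨G, fun g hg => (hG g hg).map_sup, hf⟩
end
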